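/- Let μ > 0 and let f : [0,1] → ℝ be such that f_μ := f/ln_μ is monotone decreasing and concave on [0,1]. Then for every positive integer n and every x ∈ (0,1), L_n(f, x) ≤ L_{n+1}(f, x) ≤ f(x). -/

import Mathlib

open Real Filter Set

/-- `logμ μ x = ln(1+μ+x)`. -/
noncomputable def logμ (μ x : ℝ) : ℝ := Real.log (1 + μ + x)

/-- `a μ n x = ln(1 + x/(n(1+μ))) / ln(1 + 1/(n(1+μ)))`. -/
noncomputable def aFun (μ : ℝ) (n : ℕ) (x : ℝ) : ℝ :=
  Real.log (1 + x / (n * (1 + μ))) / Real.log (1 + 1 / (n * (1 + μ)))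

/-- Bernstein basis polynomial `p_{n,k}(y) = C(n,k) y^k (1-y)^(n-k)`. -/
noncomputable def pB (n k : ℕ) (y : ℝ) : ℝ :=
  (n.choose k : ℝ) * y ^ k * (1 - y) ^ (n - k)

/-- Classical Bernstein operator. -/
noncomputable def Bop (n : ℕ) (g : ℝ → ℝ) (y : ℝ) : ℝ :=
  ∑ k ∈ Finset.range (n + 1), g ((k : ℝ) / (n : ℝ)) * pB n k y

/-- Bernstein-type logarithmic operator `L_n`. -/
noncomputable def Lop (μ : ℝ) (n : ℕ) (f : ℝ → ℝ) (x : ℝ) : ℝ :=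
  logμ μ x * ∑ k ∈ Finset.range (n + 1),
    f ((k : ℝ) / (n : ℝ)) * (1 / logμ μ ((k : ℝ) / (n : ℝ))) * pB n k (aFun μ n x)

lemma pB_zero' (n : ℕ) (y : ℝ) : pB (n+1) 0 y = (1-y) * pB n 0 y := by
  simp [pB, pow_succ]; ring

lemma pB_big (n : ℕ) (y : ℝ) : pB n (n+1) y = 0 := by
  simp [pB]

lemma pB_succ' (n k : ℕ) (hk : k ≤ n) (y : ℝ) :
    pB (n+1) (k+1) y = y * pB n k y + (1-y) * pB n (k+1) y := by
  rcases Nat.lt_or_ge k n with h | h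
  · obtain ⟨m, rfl⟩ := Nat.exists_eq_add_of_lt h
    have e1 : k + m + 1 + 1 - (k+1) = m + 1 := by omega
    have e2 : k + m + 1 - k = m + 1 := by omega
    have e3 : k + m + 1 - (k+1) = m := by omega
    simp only [pB, e1, e2, e3, Nat.choose_succ_succ (k+m+1) k]
    push_cast
    ring
  · obtain rfl : k = n := le_antisymm hk h
    simp [pB, pow_succ]; ring

lemma pB_elev (n k : ℕ) (hk : k ≤ n) (y : ℝ) :
    pB n k y = (1 - (k:ℝ)/((n:ℝ)+1)) * pB (n+1) k y
      + (((k:ℝ)+1)/((n:ℝ)+1)) * pB (n+1) (k+1) y := by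
  obtain ⟨m, rfl⟩ := Nat.exists_eq_add_of_le hk
  have h1 : ((k+m+1 : ℕ):ℝ) * ((k+m).choose k : ℝ) = ((k+m+1).choose (k+1) : ℝ) * ((k+1 : ℕ):ℝ) := by
    exact_mod_cast Nat.add_one_mul_choose_eq (k+m) k
  have h2 : ((k+m).choose k : ℝ) * ((k+m+1 : ℕ):ℝ) = ((k+m+1).choose k : ℝ) * ((m+1 : ℕ):ℝ) := by
    have := Nat.choose_mul_succ_eq (k+m) k
    rw [show k + m + 1 - k = m + 1 by omega] at this
    exact_mod_cast this
  push_cast at h1 h2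
  have e1 : k + m + 1 - (k+1) = m := by omega
  have e2 : k + m - k = m := by omega
  have e3 : k + m + 1 - k = m + 1 := by omega
  simp only [pB, e1, e2, e3]
  push_cast
  have : (k:ℝ) + m + 1 ≠ 0 := by positivity
  field_simp
  linear_combination (y * y^k*(1-y)^m) * h1 + (y^k*(1-y)^(m+1)) * h2

lemma pB_nonneg (n k : ℕ) (y : ℝ) (h0 : 0 ≤ y) (h1 : y ≤ 1) : 0 ≤ pB n k y := by
  have : 0 ≤ 1 - y := by linarith
  unfold pB; positivity

noncomputable def Ssum (n : ℕ) (c : ℕ → ℝ) (y : ℝ) : ℝ :=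
  ∑ k ∈ Finset.range (n + 1), c k * pB n k y

lemma Ssum_succ (n : ℕ) (c : ℕ → ℝ) (y : ℝ) :
    Ssum (n+1) c y = (1-y) * Ssum n c y + y * Ssum n (fun k => c (k+1)) y := by
  have h : Ssum n c y = c 0 * pB n 0 y
      + ∑ k ∈ Finset.range (n+1), c (k+1) * pB n (k+1) y := by
    have : Ssum n c y = ∑ k ∈ Finset.range (n+2), c k * pB n k y := by
      rw [Finset.sum_range_succ _ (n+1), pB_big]; simp [Ssum]
    rw [this, Finset.sum_range_succ' _ (n+1)]; ring
  rw [h]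
  unfold Ssum
  rw [Finset.sum_range_succ' _ (n+1), pB_zero', mul_add, Finset.mul_sum, Finset.mul_sum]
  have : ∀ k ∈ Finset.range (n+1), c (k+1) * pB (n+1) (k+1) y
      = (1-y) * (c (k+1) * pB n (k+1) y) + y * (c (k+1) * pB n k y) := by
    intro k hk
    rw [pB_succ' n k (by simpa [Nat.lt_succ_iff] using hk)]; ring
  rw [Finset.sum_congr rfl this, Finset.sum_add_distrib]; ring

lemma Ssum_affine (n : ℕ) : ∀ (a b y : ℝ), Ssum n (fun k => a + b * k) y = a + b * n * y := by
  induction n with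
  | zero => intro a b y; simp [Ssum, pB]
  | succ n ih =>
    intro a b y
    rw [Ssum_succ, ih]
    have : (fun k : ℕ => a + b * ((k+1 : ℕ) : ℝ)) = fun k : ℕ => (a + b) + b * (k:ℝ) := by
      funext k; push_cast; ring
    rw [this, ih]; push_cast; ring

lemma Ssum_mono (n : ℕ) (c d : ℕ → ℝ) (y : ℝ) (h0 : 0 ≤ y) (h1 : y ≤ 1)
    (h : ∀ k ≤ n, c k ≤ d k) : Ssum n c y ≤ Ssum n d y := by
  apply Finset.sum_le_sum
  intro k hk
  exact mul_le_mul_of_nonneg_right (h k (by simpa [Nat.lt_succ_iff] using hk)) (pB_nonneg n k y h0 h1)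

lemma Ssum_anti (n : ℕ) : ∀ (c : ℕ → ℝ), Antitone c → ∀ y z : ℝ, 0 ≤ y → y ≤ z → z ≤ 1 →
    Ssum n c z ≤ Ssum n c y := by
  induction n with
  | zero => intro c _ y z _ _ _; simp [Ssum, pB]
  | succ n ih =>
    intro c hc y z h0 hyz h1
    rw [Ssum_succ, Ssum_succ]
    have i1 := ih c hc y z h0 hyz h1
    have i2 := ih (fun k => c (k+1)) (fun a b h => hc (by omega)) y z h0 hyz h1
    have i3 := Ssum_mono n (fun k => c (k+1)) c y h0 (by linarith) (fun k _ => hc (by omega))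
    nlinarith [mul_le_mul_of_nonneg_left i1 (by linarith : 0 ≤ 1 - z),
      mul_le_mul_of_nonneg_left i2 (by linarith : 0 ≤ z),
      mul_le_mul_of_nonneg_left i3 (by linarith : 0 ≤ z - y)]

lemma Ssum_elev (n : ℕ) (c : ℕ → ℝ) (y : ℝ) :
    Ssum n c y = Ssum (n+1) (fun k => (1 - (k:ℝ)/((n:ℝ)+1)) * c k + (k:ℝ)/((n:ℝ)+1) * c (k-1)) y := by
  have hn : (n:ℝ) + 1 ≠ 0 := by positivity
  have e : ∀ k : ℕ, ((1 - (k:ℝ)/((n:ℝ)+1)) * c k + (k:ℝ)/((n:ℝ)+1) * c (k-1)) * pB (n+1) k y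
      = (1 - (k:ℝ)/((n:ℝ)+1)) * c k * pB (n+1) k y + (k:ℝ)/((n:ℝ)+1) * c (k-1) * pB (n+1) k y := by
    intro k; ring
  unfold Ssum
  simp only [e]
  rw [Finset.sum_add_distrib, Finset.sum_range_succ _ (n+1),
    Finset.sum_range_succ' (fun k : ℕ => (k:ℝ)/((n:ℝ)+1) * c (k-1) * pB (n+1) k y) (n+1)]
  have z1 : 1 - ((n+1 : ℕ):ℝ)/((n:ℝ)+1) = 0 := by push_cast; field_simp; ring
  rw [z1]
  simp only [Nat.cast_zero, zero_div, zero_mul, add_zero, ← Finset.sum_add_distrib]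
  apply Finset.sum_congr rfl
  intro k hk
  rw [pB_elev n k (by simpa [Nat.lt_succ_iff] using hk)]
  push_cast
  ring

lemma frac_mem (n k : ℕ) (hn : 0 < n) (hk : k ≤ n) : (k:ℝ)/(n:ℝ) ∈ Icc (0:ℝ) 1 := by
  have : (0:ℝ) < n := by exact_mod_cast hn
  refine ⟨by positivity, ?_⟩
  rw [div_le_one this]; exact_mod_cast hk

lemma Bern_anti (n : ℕ) (hn : 0 < n) (g : ℝ → ℝ) (hg : AntitoneOn g (Icc 0 1)) (y z : ℝ)
    (h0 : 0 ≤ y) (hyz : y ≤ z) (h1 : z ≤ 1) :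
    Ssum n (fun k => g ((k:ℝ)/(n:ℝ))) z ≤ Ssum n (fun k => g ((k:ℝ)/(n:ℝ))) y := by
  have e : ∀ w, Ssum n (fun k => g ((k:ℝ)/(n:ℝ))) w
      = Ssum n (fun k => g (((min k n : ℕ):ℝ)/(n:ℝ))) w := by
    intro w
    apply Finset.sum_congr rfl
    intro k hk
    have : k ≤ n := by simpa [Nat.lt_succ_iff] using hk
    simp only [min_eq_left this]
  rw [e, e]
  apply Ssum_anti n _ _ y z h0 hyz h1
  intro a b hab
  apply hg (frac_mem n _ hn (min_le_right _ _)) (frac_mem n _ hn (min_le_right _ _))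
  have : min a n ≤ min b n := min_le_min_right n hab
  have : ((min a n : ℕ):ℝ) ≤ ((min b n : ℕ):ℝ) := Nat.cast_le.mpr this
  gcongr

lemma Bern_elev (n : ℕ) (hn : 0 < n) (g : ℝ → ℝ) (hg : ConcaveOn ℝ (Icc 0 1) g) (y : ℝ)
    (h0 : 0 ≤ y) (h1 : y ≤ 1) :
    Ssum n (fun k => g ((k:ℝ)/(n:ℝ))) y ≤ Ssum (n+1) (fun k => g ((k:ℝ)/((n+1 : ℕ):ℝ))) y := by
  rw [Ssum_elev]
  apply Ssum_mono _ _ _ _ h0 h1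
  have hn' : (0:ℝ) < n := by exact_mod_cast hn
  intro k hk
  rcases k with _ | k
  · simp
  rcases Nat.lt_or_ge k n with h | h
  · have := hg.2 (frac_mem n (k+1) hn h) (frac_mem n k hn h.le)
      (show (0:ℝ) ≤ 1 - ((k+1 : ℕ):ℝ)/((n:ℝ)+1) by
        have := (frac_mem (n+1) (k+1) (by omega) hk).2
        push_cast at this ⊢
        linarith) (show (0:ℝ) ≤ ((k+1 : ℕ):ℝ)/((n:ℝ)+1) by positivity) (by ring)
    simp only [smul_eq_mul] at this
    simp only [Nat.add_sub_cancel]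
    refine this.trans (le_of_eq ?_)
    congr 1
    push_cast
    field_simp
    ring
  · obtain rfl : k = n := by omega
    have : ((k+1 : ℕ):ℝ)/((k:ℝ)+1) = 1 := by push_cast; field_simp
    simp only [this, Nat.add_sub_cancel]
    rw [div_self hn'.ne', div_self (by positivity)]
    simp

lemma Bern_jensen (n : ℕ) (hn : 0 < n) (g : ℝ → ℝ) (hg : ConcaveOn ℝ (Icc 0 1) g) (y : ℝ)
    (h0 : 0 ≤ y) (h1 : y ≤ 1) :
    Ssum n (fun k => g ((k:ℝ)/(n:ℝ))) y ≤ g y := by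
  have hn' : (n:ℝ) ≠ 0 := by positivity
  have s1 := Ssum_affine n 1 0 y
  have s2 := Ssum_affine n 0 (1/n) y
  have := hg.le_map_sum (t := Finset.range (n+1)) (w := fun k => pB n k y)
    (p := fun k : ℕ => (k:ℝ)/(n:ℝ)) (fun k _ => pB_nonneg n k y h0 h1)
    (by simpa [Ssum] using s1)
    (fun k hk => frac_mem n k hn (by simpa [Nat.lt_succ_iff] using hk))
  simp only [smul_eq_mul] at this
  have e : ∑ k ∈ Finset.range (n+1), pB n k y * ((k:ℝ)/(n:ℝ)) = y := by
    rw [show y = 0 + 1/(n:ℝ) * n * y by field_simp; ring, ← s2]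
    have e0 : 0 + 1/(n:ℝ) * n * y = y := by field_simp; ring
    rw [s2, e0]
    nth_rewrite 2 [← e0]
    rw [← s2]
    apply Finset.sum_congr rfl
    intro k _
    ring
  rw [e] at this
  refine le_trans (le_of_eq ?_) this
  apply Finset.sum_congr rfl
  intro k _
  ring

lemma h_mono (x s t : ℝ) (hx : x ∈ Ioo (0:ℝ) 1) (hs : 0 < s) (hst : s ≤ t) :
    Real.log (1 + x*s) / Real.log (1+s) ≤ Real.log (1 + x*t) / Real.log (1+t) := by
  have ls : 0 < Real.log (1+s) := Real.log_pos (by linarith)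
  have lt : 0 < Real.log (1+t) := Real.log_pos (by linarith)
  have hx0 := hx.1
  have ht : 0 < t := by linarith
  set r := Real.log (1+s) / Real.log (1+t) with hr
  have r0 : 0 ≤ r := by positivity
  have r1 : r ≤ 1 := by
    rw [hr, div_le_one lt]
    exact Real.log_le_log (by linarith) (by linarith)
  have hc := (Real.concaveOn_rpow r0 r1).2 (show (1:ℝ) ∈ _ by simp)
    (show 1 + t ∈ _ by simp; linarith) (show 0 ≤ 1 - x by linarith [hx.2]) hx0.le (by ring)
  have e : (1+t)^r = 1+s := by
    rw [Real.rpow_def_of_pos (by linarith), hr, mul_div_cancel₀ _ lt.ne', Real.exp_log (by linarith)]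
  simp only [smul_eq_mul, Real.one_rpow, e] at hc
  have hc' : 1 + x*s ≤ (1+x*t)^r := by
    calc 1 + x*s = (1-x)*1 + x*(1+s) := by ring
      _ ≤ _ := hc
      _ = _ := by congr 1; ring
  have hl := Real.log_le_log (by positivity) hc'
  rw [Real.log_rpow (by positivity), hr] at hl
  rw [div_le_div_iff₀ ls lt]
  rw [div_mul_eq_mul_div, le_div_iff₀ lt] at hl
  linarith

lemma h_ge (x t : ℝ) (hx : x ∈ Ioo (0:ℝ) 1) (ht : 0 < t) :
    x ≤ Real.log (1 + x*t) / Real.log (1+t) := by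
  have lt : 0 < Real.log (1+t) := Real.log_pos (by linarith)
  rw [le_div_iff₀ lt]
  have hc := strictConcaveOn_log_Ioi.concaveOn.2 (show (1:ℝ) ∈ _ by simp)
    (show 1 + t ∈ _ by simp; linarith) (show 0 ≤ 1 - x by linarith [hx.2]) hx.1.le (by ring)
  simp only [smul_eq_mul, Real.log_one, mul_zero, zero_add] at hc
  refine hc.trans (le_of_eq ?_)
  congr 1; ring

lemma h_le (x t : ℝ) (hx : x ∈ Ioo (0:ℝ) 1) (ht : 0 < t) :
    Real.log (1 + x*t) / Real.log (1+t) ≤ 1 := by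
  have lt : 0 < Real.log (1+t) := Real.log_pos (by linarith)
  have := hx.1
  rw [div_le_one lt]
  apply Real.log_le_log (by positivity)
  nlinarith [hx.2]

lemma aFun_eq (μ : ℝ) (n : ℕ) (x : ℝ) : aFun μ n x =
    Real.log (1 + x * (1/(n*(1+μ)))) / Real.log (1 + 1/(n*(1+μ))) := by
  unfold aFun; rw [mul_one_div]

lemma Lop_eq (μ : ℝ) (n : ℕ) (f : ℝ → ℝ) (x : ℝ) : Lop μ n f x =
    logμ μ x * Ssum n (fun k => (fun t => f t / logμ μ t) ((k:ℝ)/(n:ℝ))) (aFun μ n x) := by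
  simp only [Lop, Ssum, mul_one_div]

theorem stmt19 (μ : ℝ) (hμ : 0 < μ) (f : ℝ → ℝ)
    (hmono : AntitoneOn (fun t => f t / logμ μ t) (Set.Icc (0:ℝ) 1))
    (hconc : ConcaveOn ℝ (Set.Icc (0:ℝ) 1) (fun t => f t / logμ μ t))
    (n : ℕ) (hn : 0 < n) (x : ℝ) (hx : x ∈ Set.Ioo (0:ℝ) 1) :
    Lop μ n f x ≤ Lop μ (n + 1) f x ∧ Lop μ (n + 1) f x ≤ f x := by
  have hx0 := hx.1
  have hl : 0 < logμ μ x := Real.log_pos (by linarith)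
  have hn' : (0:ℝ) < n := by exact_mod_cast hn
  have hs : (0:ℝ) < 1/(((n+1 : ℕ):ℝ)*(1+μ)) := by positivity
  have ht : (0:ℝ) < 1/((n:ℝ)*(1+μ)) := by positivity
  have hst : (1:ℝ)/(((n+1 : ℕ):ℝ)*(1+μ)) ≤ 1/((n:ℝ)*(1+μ)) := by
    apply one_div_le_one_div_of_le (by positivity)
    push_cast
    nlinarith
  have a1 : aFun μ (n+1) x ≤ aFun μ n x := by
    rw [aFun_eq, aFun_eq]; exact h_mono x _ _ hx hs hst
  have a2 : x ≤ aFun μ (n+1) x := by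
    rw [aFun_eq]; exact h_ge x _ hx hs
  have a3 : aFun μ n x ≤ 1 := by
    rw [aFun_eq]; exact h_le x _ hx ht
  have a4 : 0 ≤ aFun μ (n+1) x := by linarith
  have a5 : aFun μ (n+1) x ≤ 1 := by linarith
  constructor
  · rw [Lop_eq, Lop_eq]
    apply mul_le_mul_of_nonneg_left _ hl.le
    exact (Bern_anti n hn _ hmono _ _ a4 a1 a3).trans (Bern_elev n hn _ hconc _ a4 a5)
  · rw [Lop_eq]
    have h := (Bern_jensen (n+1) (by omega) _ hconc _ a4 a5).trans
      (hmono ⟨hx0.le, hx.2.le⟩ ⟨a4, a5⟩ a2)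
    refine (mul_le_mul_of_nonneg_left h hl.le).trans (le_of_eq ?_)
    simp only
    field_simp
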